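/- Let r(n) be the resonator sequence with parameter L, and let ω(n) ≥ 0 be a multiplicative function satisfying: Σ_{X ≤ p ≤ Y} ω(p)/(p log p) ≤ a_ω (1/log X − 1/log Y) + O_ω(1/log²X) for all Y ≥ 2X ≥ 4, for some a_ω > 0. Then for every N with L ≤ √(a_ω^{−1} log N log log N): Σ_{n ≤ N} r(n)² ω(n) = (1 + o*(1)) ∏_p (1 + r(p)² ω(p)). If, additionally, ω′(n) ≥ 0 is a multiplicative function satisfying Σ_{p ≤ X} ω′(p)/p ≪ e^{√(log X)}/log X, then Σ_{nm ≤ N, gcd(n,m)=1} r(n)² r(m) ω(n) ω′(m)/√m = (1 + o*(1)) ∏_p (1 + r(p)² ω(p) + r(p) ω′(p)/√p). Here o*(1) denotes a quantity that is O_C(N^{−C/(log log N)³}) for any C > 0. -/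

import Mathlib

open Filter

noncomputable section

/-- The value at the prime `p` of the resonator sequence with parameter `L`:
`r(p) = L/(√p log p)` for `L² ≤ p ≤ exp(log² L)`, and `r(p) = 0` otherwise. -/
def rpR (L : ℝ) (p : ℕ) : ℝ :=
  if L ^ 2 ≤ (p : ℝ) ∧ (p : ℝ) ≤ Real.exp ((Real.log L) ^ 2) then
    L / (Real.sqrt p * Real.log p) else 0

/-- The resonator sequence `r(n)`: the multiplicative function supported on squarefree
positive integers with `r(p) = rpR L p` at primes. -/
def resR (L : ℝ) (n : ℕ) : ℝ :=
  if Squarefree n then ∏ p ∈ n.primeFactors, rpR L p else 0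

/-!
Both sums have the form `∑ k ≤ N, H k`, where `H` is multiplicative, supported on squarefree
integers and equal to `h p = r(p)² ω(p) + r(p) ω′(p) / √p` at primes (`ω′ = 0` in the first case),
and the complete sum of `H` is the Euler product. Rankin's trick with exponent `α` bounds the
relative size of the tail by `exp (-α log N + ∑ p, (p ^ α - 1) h p)`.

Take `α = κ / x²` with `x = log log N`. Expanding `p ^ α`, the main term of the sum over primes is
`α a L² / (2 log L)`, which for `L ≤ √(a⁻¹ log N log log N)` is at most
`α log N (1 - log x / (4 x))`. This saves `κ log N log x / (4 x³)`, which eventually exceeds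
`C log N / x³` for every `C`. The quadratic term in the expansion involves `∑ ω(p) / p` over the
support of `r`, which is `O(log log L)` by splitting the range at `X, X², X⁴, …`; hence it eats up
only a small part of the saving once `κ` is small. The contribution of `ω′` is of the size of the
error term in the hypothesis on `ω` and is smaller than the saving by a factor `log x`.
-/

section

open Finset Real

/-! ### Multiplicative functions supported on squarefree integers -/

/-- The multiplicative function supported on squarefree integers that takes the prescribed values
`h p` at primes; `resR L` is the case `h = rpR L`. -/
def squarefreeExt {R : Type*} [CommMonoidWithZero R] (h : ℕ → R) : ArithmeticFunction R :=
  ⟨fun n => if Squarefree n then ∏ p ∈ n.primeFactors, h p else 0, by simp⟩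

section SquarefreeExt

section CommMonoidWithZero

variable {R : Type*} [CommMonoidWithZero R] (f g : ℕ → R)

lemma squarefreeExt_of_squarefree {n : ℕ} (hn : Squarefree n) :
    squarefreeExt f n = ∏ p ∈ n.primeFactors, f p :=
  if_pos hn

lemma squarefreeExt_of_not_squarefree {n : ℕ} (hn : ¬ Squarefree n) : squarefreeExt f n = 0 :=
  if_neg hn

lemma squarefreeExt_prime {p : ℕ} (hp : p.Prime) : squarefreeExt f p = f p := by
  rw [squarefreeExt_of_squarefree f hp.prime.squarefree, hp.primeFactors, prod_singleton]

lemma isMultiplicative_squarefreeExt : (squarefreeExt f).IsMultiplicative := by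
  refine ⟨by simp [squarefreeExt_of_squarefree], fun {m n} hmn => ?_⟩
  by_cases hsq : Squarefree m ∧ Squarefree n
  · rw [squarefreeExt_of_squarefree f ((Nat.squarefree_mul hmn).2 hsq),
      squarefreeExt_of_squarefree f hsq.1, squarefreeExt_of_squarefree f hsq.2,
      hmn.primeFactors_mul, prod_union hmn.disjoint_primeFactors]
  · rw [squarefreeExt_of_not_squarefree f (mt (Nat.squarefree_mul hmn).1 hsq)]
    rcases not_and_or.1 hsq with hm | hn
    · rw [squarefreeExt_of_not_squarefree f hm, zero_mul]
    · rw [squarefreeExt_of_not_squarefree f hn, mul_zero]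

lemma squarefreeExt_mul (n : ℕ) :
    squarefreeExt (fun p => f p * g p) n = squarefreeExt f n * squarefreeExt g n := by
  by_cases hn : Squarefree n
  · simp only [squarefreeExt_of_squarefree _ hn, prod_mul_distrib]
  · simp only [squarefreeExt_of_not_squarefree _ hn, zero_mul]

variable {g} in
lemma eq_prod_primeFactors_of_squarefree (hg1 : g 1 = 1)
    (hg : ∀ m n : ℕ, m.Coprime n → g (m * n) = g m * g n) {n : ℕ} (hn : Squarefree n) :
    g n = ∏ p ∈ n.primeFactors, g p := by
  rw [Nat.multiplicative_factorization g hg hg1 hn.ne_zero, Finsupp.prod,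
    Nat.support_factorization]
  refine prod_congr rfl fun p hp => ?_
  rw [Nat.factorization_eq_one_of_squarefree hn (Nat.prime_of_mem_primeFactors hp)
    (Nat.dvd_of_mem_primeFactors hp), pow_one]

variable {g} in
lemma squarefreeExt_mul_of_multiplicative (hg1 : g 1 = 1)
    (hg : ∀ m n : ℕ, m.Coprime n → g (m * n) = g m * g n) (n : ℕ) :
    squarefreeExt (fun p => f p * g p) n = squarefreeExt f n * g n := by
  by_cases hn : Squarefree n
  · rw [squarefreeExt_mul, squarefreeExt_of_squarefree g hn,
      eq_prod_primeFactors_of_squarefree hg1 hg hn]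
  · simp only [squarefreeExt_of_not_squarefree _ hn, zero_mul]

variable {f} in
lemma dvd_prod_of_squarefreeExt_ne_zero {P : Finset ℕ} (hf : ∀ p, p.Prime → p ∉ P → f p = 0)
    {n : ℕ} (hn : squarefreeExt f n ≠ 0) : n ∣ ∏ p ∈ P, p := by
  have hsq : Squarefree n := not_imp_comm.1 (squarefreeExt_of_not_squarefree f) hn
  rw [← Nat.prod_primeFactors_of_squarefree hsq]
  refine prod_dvd_prod_of_subset _ _ _ fun p hp => not_imp_comm.1 (fun hpP => ?_) hn
  rw [squarefreeExt_of_squarefree f hsq]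
  exact prod_eq_zero hp (hf p (Nat.prime_of_mem_primeFactors hp) hpP)

end CommMonoidWithZero

lemma squarefreeExt_nonneg {R : Type*} [CommSemiring R] [PartialOrder R] [IsOrderedRing R]
    {h : ℕ → R} (hh : ∀ p, 0 ≤ h p) (n : ℕ) : 0 ≤ squarefreeExt h n := by
  by_cases hn : Squarefree n
  · rw [squarefreeExt_of_squarefree h hn]
    exact prod_nonneg fun p _ => hh p
  · rw [squarefreeExt_of_not_squarefree h hn]

lemma squarefreeExt_rpow_mul (h : ℕ → ℝ) (α : ℝ) (n : ℕ) :
    squarefreeExt (fun p => (p : ℝ) ^ α * h p) n = (n : ℝ) ^ α * squarefreeExt h n := by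
  simp only [mul_comm _ (h _), mul_comm _ (squarefreeExt h n)]
  refine squarefreeExt_mul_of_multiplicative h (g := fun n => (n : ℝ) ^ α) (by simp)
    (fun m n _ => ?_) n
  rw [Nat.cast_mul, mul_rpow m.cast_nonneg n.cast_nonneg]

section CommSemiring

variable {R : Type*} [CommSemiring R]

lemma sum_divisors_squarefreeExt (h : ℕ → R) {P : Finset ℕ} (hP : ∀ p ∈ P, p.Prime) :
    ∑ d ∈ (∏ p ∈ P, p).divisors, squarefreeExt h d = ∏ p ∈ P, (1 + h p) := by
  have hsq : Squarefree (∏ p ∈ P, p) :=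
    squarefree_prod_of_pairwise_isCoprime
      (fun p hp q hq hpq =>
        Nat.coprime_iff_isRelPrime.1 ((Nat.coprime_primes (hP p hp) (hP q hq)).2 hpq))
      fun p hp => (hP p hp).prime.squarefree
  rw [← (isMultiplicative_squarefreeExt h).prodPrimeFactors_one_add_of_squarefree hsq,
    Nat.primeFactors_prod hP]
  exact prod_congr rfl fun p hp => by rw [squarefreeExt_prime h (hP p hp)]

lemma sum_divisorsAntidiagonal_coprime_squarefreeExt (f g : ℕ → R) (k : ℕ) :
    (∑ x ∈ k.divisorsAntidiagonal,
      if x.1.Coprime x.2 then squarefreeExt f x.1 * squarefreeExt g x.2 else 0) =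
      squarefreeExt (fun p => f p + g p) k := by
  by_cases hk : Squarefree k
  · have hprod := (isMultiplicative_squarefreeExt f).prodPrimeFactors_add_of_squarefree
      (isMultiplicative_squarefreeExt g) hk
    rw [ArithmeticFunction.mul_apply, ArithmeticFunction.prodPrimeFactors_apply hk.ne_zero] at hprod
    calc _ = ∑ x ∈ k.divisorsAntidiagonal, squarefreeExt f x.1 * squarefreeExt g x.2 :=
          sum_congr rfl fun x hx => if_pos <| Nat.coprime_of_squarefree_mul <|
            (Nat.mem_divisorsAntidiagonal.1 hx).1 ▸ hk
      _ = ∏ p ∈ k.primeFactors, (squarefreeExt f + squarefreeExt g) p := hprod.symm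
      _ = _ := by
          rw [squarefreeExt_of_squarefree _ hk]
          refine prod_congr rfl fun p hp => ?_
          have hp' := Nat.prime_of_mem_primeFactors hp
          rw [ArithmeticFunction.add_apply, squarefreeExt_prime f hp', squarefreeExt_prime g hp']
  · rw [squarefreeExt_of_not_squarefree _ hk]
    refine sum_eq_zero fun x hx => ite_eq_right_iff.2 fun hx_coprime => ?_
    rw [← (Nat.mem_divisorsAntidiagonal.1 hx).1, Nat.squarefree_mul hx_coprime,
      not_and_or] at hk
    rcases hk with h₁ | h₂
    · rw [squarefreeExt_of_not_squarefree f h₁, zero_mul]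
    · rw [squarefreeExt_of_not_squarefree g h₂, mul_zero]

end CommSemiring

lemma sum_Icc_sum_Icc_div_eq_sum_divisorsAntidiagonal {M : Type*} [AddCommMonoid M]
    (G : ℕ → ℕ → M) (N : ℕ) :
    ∑ n ∈ Icc 1 N, ∑ m ∈ Icc 1 (N / n), G n m =
      ∑ k ∈ Icc 1 N, ∑ x ∈ k.divisorsAntidiagonal, G x.1 x.2 := by
  rw [sum_sigma', sum_sigma']
  refine sum_nbij' (fun a => ⟨a.1 * a.2, (a.1, a.2)⟩) (fun b => ⟨b.2.1, b.2.2⟩)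
    ?_ ?_ (fun _ _ => rfl) ?_ (fun _ _ => rfl)
  · rintro ⟨n, m⟩ hnm
    simp only [mem_sigma, mem_Icc, Nat.mem_divisorsAntidiagonal] at hnm ⊢
    obtain ⟨⟨hn, -⟩, hm, hmN⟩ := hnm
    have hpos : 0 < n * m := Nat.mul_pos hn hm
    exact ⟨⟨hpos, by rwa [mul_comm, ← Nat.le_div_iff_mul_le hn]⟩, trivial, hpos.ne'⟩
  · rintro ⟨k, n, m⟩ hk
    simp only [mem_sigma, mem_Icc, Nat.mem_divisorsAntidiagonal] at hk ⊢
    obtain ⟨⟨-, hN⟩, rfl, hne⟩ := hk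
    have hn : 0 < n := Nat.pos_of_ne_zero (left_ne_zero_of_mul hne)
    have hm : 0 < m := Nat.pos_of_ne_zero (right_ne_zero_of_mul hne)
    exact ⟨⟨hn, (Nat.le_mul_of_pos_right n hm).trans hN⟩, hm,
      by rwa [Nat.le_div_iff_mul_le hn, mul_comm]⟩
  · rintro ⟨k, n, m⟩ hk
    simp only [mem_sigma, Nat.mem_divisorsAntidiagonal] at hk
    obtain ⟨-, rfl, -⟩ := hk
    rfl

/-! ### Rankin's trick -/

lemma sum_filter_lt_le_rpow_neg_mul_sum {f : ℕ → ℝ} (hf : ∀ n, 0 ≤ f n) (s : Finset ℕ)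
    {α : ℝ} (hα : 0 ≤ α) {N : ℕ} (hN : 0 < N) :
    ∑ n ∈ s with N < n, f n ≤ (N : ℝ) ^ (-α) * ∑ n ∈ s, (n : ℝ) ^ α * f n := by
  have hN' : (0 : ℝ) < N := Nat.cast_pos.2 hN
  have hweight {n : ℕ} (hn : N < n) : 1 ≤ (N : ℝ) ^ (-α) * (n : ℝ) ^ α := by
    rw [rpow_neg hN'.le, inv_mul_eq_div, one_le_div (by positivity)]
    gcongr
  calc ∑ n ∈ s with N < n, f n
      ≤ ∑ n ∈ s with N < n, (N : ℝ) ^ (-α) * ((n : ℝ) ^ α * f n) := by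
        refine sum_le_sum fun n hn => ?_
        rw [← mul_assoc]
        exact le_mul_of_one_le_left (hf n) (hweight (mem_filter.1 hn).2)
    _ ≤ ∑ n ∈ s, (N : ℝ) ^ (-α) * ((n : ℝ) ^ α * f n) :=
        sum_le_sum_of_subset_of_nonneg (filter_subset _ _) fun n _ _ =>
          mul_nonneg (by positivity) (mul_nonneg (by positivity) (hf n))
    _ = _ := (mul_sum ..).symm

lemma prod_one_add_mul_le {ι : Type*} {s : Finset ι} {w h : ι → ℝ}
    (hw : ∀ i ∈ s, 1 ≤ w i) (hh : ∀ i ∈ s, 0 ≤ h i) :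
    ∏ i ∈ s, (1 + w i * h i) ≤ exp (∑ i ∈ s, (w i - 1) * h i) * ∏ i ∈ s, (1 + h i) := by
  rw [exp_sum, ← prod_mul_distrib]
  refine prod_le_prod (fun i hi => ?_) fun i hi => ?_
  · have := hh i hi
    have := zero_le_one.trans (hw i hi)
    positivity
  · have hexp := add_one_le_exp ((w i - 1) * h i)
    have hnonneg : 0 ≤ (w i - 1) * h i := mul_nonneg (sub_nonneg.2 (hw i hi)) (hh i hi)
    calc 1 + w i * h i ≤ ((w i - 1) * h i + 1) * (1 + h i) := by
          nlinarith [mul_nonneg hnonneg (hh i hi)]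
      _ ≤ _ := by gcongr; linarith [hh i hi]

variable {h : ℕ → ℝ} {P : Finset ℕ}

lemma prod_one_add_sub_sum_squarefreeExt (hP : ∀ p ∈ P, p.Prime)
    (hsupp : ∀ p, p.Prime → p ∉ P → h p = 0) (N : ℕ) :
    ∏ p ∈ P, (1 + h p) - ∑ k ∈ Icc 1 N, squarefreeExt h k =
      ∑ d ∈ (∏ p ∈ P, p).divisors with N < d, squarefreeExt h d := by
  have hhead : ∑ k ∈ Icc 1 N, squarefreeExt h k =
      ∑ d ∈ (∏ p ∈ P, p).divisors with ¬ N < d, squarefreeExt h d := by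
    refine (sum_subset (fun d hd => ?_) fun k hk hkP => ?_).symm
    · simp only [mem_filter, not_lt] at hd
      exact mem_Icc.2 ⟨Nat.pos_of_mem_divisors hd.1, hd.2⟩
    · by_contra hne
      exact hkP <| mem_filter.2 ⟨Nat.mem_divisors.2 ⟨dvd_prod_of_squarefreeExt_ne_zero hsupp hne,
        prod_ne_zero_iff.2 fun p hp => (hP p hp).ne_zero⟩, not_lt.2 (mem_Icc.1 hk).2⟩
  rw [hhead, ← sum_divisors_squarefreeExt h hP,
    ← sum_filter_add_sum_filter_not _ (fun d => N < d), add_sub_cancel_right]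

lemma abs_sum_squarefreeExt_sub_prod_le (hP : ∀ p ∈ P, p.Prime) (hh : ∀ p, 0 ≤ h p)
    (hsupp : ∀ p, p.Prime → p ∉ P → h p = 0) {α : ℝ} (hα : 0 ≤ α) {N : ℕ} (hN : 0 < N) :
    |∑ k ∈ Icc 1 N, squarefreeExt h k - ∏ p ∈ P, (1 + h p)| ≤
      exp (-α * log N + ∑ p ∈ P, ((p : ℝ) ^ α - 1) * h p) * ∏ p ∈ P, (1 + h p) := by
  have hone_le : ∀ p ∈ P, 1 ≤ (p : ℝ) ^ α := fun p hp =>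
    one_le_rpow (mod_cast (hP p hp).one_lt.le) hα
  rw [abs_sub_comm, prod_one_add_sub_sum_squarefreeExt hP hsupp,
    abs_of_nonneg (sum_nonneg fun d _ => squarefreeExt_nonneg hh d)]
  calc ∑ d ∈ (∏ p ∈ P, p).divisors with N < d, squarefreeExt h d
      ≤ (N : ℝ) ^ (-α) * ∑ d ∈ (∏ p ∈ P, p).divisors, (d : ℝ) ^ α * squarefreeExt h d :=
        sum_filter_lt_le_rpow_neg_mul_sum (squarefreeExt_nonneg hh) _ hα hN
    _ = (N : ℝ) ^ (-α) * ∏ p ∈ P, (1 + (p : ℝ) ^ α * h p) := by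
        simp only [← squarefreeExt_rpow_mul, sum_divisors_squarefreeExt _ hP]
    _ ≤ (N : ℝ) ^ (-α) *
          (exp (∑ p ∈ P, ((p : ℝ) ^ α - 1) * h p) * ∏ p ∈ P, (1 + h p)) := by
        gcongr
        exact prod_one_add_mul_le hone_le fun p _ => hh p
    _ = _ := by
        rw [rpow_def_of_pos (Nat.cast_pos.2 hN), exp_add, mul_comm (log _), mul_assoc]

end SquarefreeExt

lemma tprod_primes_eq_prod {M : Type*} [CommMonoid M] [TopologicalSpace M] {f : ℕ → M}
    {P : Finset ℕ} (hP : ∀ p ∈ P, p.Prime) (hf : ∀ p, p.Prime → p ∉ P → f p = 1) :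
    ∏' p : Nat.Primes, f p = ∏ p ∈ P, f p := by
  rw [← prod_subtype_of_mem f hP]
  exact tprod_eq_prod fun p hp => hf p p.2 fun hpP => hp (mem_subtype.2 hpP)

/-! ### Sums over primes -/

/-- The finite set of primes `p` with `X ≤ p ≤ Y`. -/
def primesIcc (X Y : ℝ) : Finset ℕ := {p ∈ Icc ⌈X⌉₊ ⌊Y⌋₊ | p.Prime}

lemma mem_primesIcc {X Y : ℝ} {p : ℕ} :
    p ∈ primesIcc X Y ↔ (X ≤ p ∧ (p : ℝ) ≤ Y) ∧ p.Prime := by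
  rw [primesIcc, mem_filter, mem_Icc, Nat.ceil_le]
  exact and_congr_left fun hp => and_congr_right fun _ => Nat.le_floor_iff' hp.ne_zero

lemma prime_of_mem_primesIcc {X Y : ℝ} {p : ℕ} (hp : p ∈ primesIcc X Y) : p.Prime :=
  (mem_primesIcc.1 hp).2

lemma primesIcc_mono_right {X Y Z : ℝ} (hYZ : Y ≤ Z) : primesIcc X Y ⊆ primesIcc X Z :=
  fun p hp => by
    obtain ⟨⟨hX, hY⟩, hprime⟩ := mem_primesIcc.1 hp
    exact mem_primesIcc.2 ⟨⟨hX, hY.trans hYZ⟩, hprime⟩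

lemma primesIcc_subset_union (X Y Z : ℝ) : primesIcc X Z ⊆ primesIcc X Y ∪ primesIcc Y Z :=
  fun p hp => by
    obtain ⟨⟨hX, hZ⟩, hprime⟩ := mem_primesIcc.1 hp
    rcases le_total (p : ℝ) Y with hY | hY
    · exact mem_union_left _ (mem_primesIcc.2 ⟨⟨hX, hY⟩, hprime⟩)
    · exact mem_union_right _ (mem_primesIcc.2 ⟨⟨hY, hZ⟩, hprime⟩)

lemma sum_primesIcc_pow_two_pow_le {f : ℕ → ℝ} (hf : ∀ p, 0 ≤ f p) {B : ℝ}
    (hB : ∀ X : ℝ, 2 ≤ X → ∑ p ∈ primesIcc X (X ^ 2), f p ≤ B) (K : ℕ) {X : ℝ} (hX : 2 ≤ X) :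
    ∑ p ∈ primesIcc X (X ^ 2 ^ K), f p ≤ B * (K + 1) := by
  induction K generalizing X with
  | zero =>
    have hsub : primesIcc X (X ^ 2 ^ 0) ⊆ primesIcc X (X ^ 2) :=
      primesIcc_mono_right (pow_le_pow_right₀ (by linarith) (by norm_num))
    simpa using (sum_le_sum_of_subset_of_nonneg hsub fun p _ _ => hf p).trans (hB X hX)
  | succ K ih =>
    have hrest : ∑ p ∈ primesIcc (X ^ 2) (X ^ 2 ^ (K + 1)), f p ≤ B * (K + 1) := by
      rw [pow_succ' 2 K, pow_mul]
      exact ih (by nlinarith)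
    calc ∑ p ∈ primesIcc X (X ^ 2 ^ (K + 1)), f p
        ≤ ∑ p ∈ primesIcc X (X ^ 2) ∪ primesIcc (X ^ 2) (X ^ 2 ^ (K + 1)), f p :=
          sum_le_sum_of_subset_of_nonneg (primesIcc_subset_union _ _ _) fun p _ _ => hf p
      _ ≤ ∑ p ∈ primesIcc X (X ^ 2), f p
            + ∑ p ∈ primesIcc (X ^ 2) (X ^ 2 ^ (K + 1)), f p := by
          rw [← sum_union_inter]
          exact le_add_of_nonneg_right (sum_nonneg fun p _ => hf p)
      _ ≤ B + B * (K + 1) := add_le_add (hB X hX) hrest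
      _ = B * ((K + 1 : ℕ) + 1) := by push_cast; ring

/-- The density condition on `ω`: its mean value over primes is at most `a`, in logarithmically
weighted form and with error constant `c`. -/
def LogWeightedPrimeBound (ω : ℕ → ℝ) (a c : ℝ) : Prop :=
  ∀ X Y : ℝ, 2 ≤ X → 2 * X ≤ Y →
    ∑ p ∈ primesIcc X Y, ω p / (p * log p) ≤ a * (1 / log X - 1 / log Y) + c / log X ^ 2

/-- The growth condition on `ω′`, with implied constant `c`; at the end `X = exp(log² L)` of the
support of the resonator it reads `∑ ω′(p) / p ≤ c L / log² L`. -/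
def ExpSqrtLogPrimeBound (ω' : ℕ → ℝ) (c : ℝ) : Prop :=
  ∀ X : ℝ, 2 ≤ X →
    ∑ p ∈ (Iic ⌊X⌋₊).filter Nat.Prime, ω' p / p ≤ c * exp √(log X) / log X

namespace LogWeightedPrimeBound

variable {ω : ℕ → ℝ} {a c : ℝ}

lemma sum_div_mul_log_le (hω : LogWeightedPrimeBound ω a c) (hω0 : ∀ n, 0 ≤ ω n) (ha : 0 ≤ a)
    {X : ℝ} (hX : 2 ≤ X) (Y : ℝ) :
    ∑ p ∈ primesIcc X Y, ω p / (p * log p) ≤ a / log X + |c| / log X ^ 2 := by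
  have hnonneg (p : ℕ) : 0 ≤ ω p / (p * log p) :=
    div_nonneg (hω0 p) (mul_nonneg p.cast_nonneg (log_natCast_nonneg p))
  set Z := max Y (2 * X)
  have hlogZ : 0 ≤ log Z := log_nonneg ((by linarith : 1 ≤ 2 * X).trans (le_max_right _ _))
  calc ∑ p ∈ primesIcc X Y, ω p / (p * log p)
      ≤ ∑ p ∈ primesIcc X Z, ω p / (p * log p) :=
        sum_le_sum_of_subset_of_nonneg (primesIcc_mono_right (le_max_left _ _))
          fun p _ _ => hnonneg p
    _ ≤ a * (1 / log X - 1 / log Z) + c / log X ^ 2 := hω X Z hX (le_max_right _ _)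
    _ ≤ a * (1 / log X) + |c| / log X ^ 2 := by
        gcongr
        · exact sub_le_self _ (one_div_nonneg.2 hlogZ)
        · exact le_abs_self c
    _ = _ := by rw [mul_one_div]

lemma sum_div_primesIcc_sq_le (hω : LogWeightedPrimeBound ω a c) (hω0 : ∀ n, 0 ≤ ω n)
    (ha : 0 ≤ a) {X : ℝ} (hX : 2 ≤ X) :
    ∑ p ∈ primesIcc X (X ^ 2), ω p / p ≤ 2 * a + 4 * |c| := by
  have hlogX : 1 / 2 ≤ log X := by
    linarith [log_le_log two_pos hX, log_two_gt_d9]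
  have hterm : ∀ p ∈ primesIcc X (X ^ 2), ω p / p ≤ 2 * log X * (ω p / (p * log p)) := by
    intro p hp
    obtain ⟨⟨-, hpX⟩, hprime⟩ := mem_primesIcc.1 hp
    have hp1 : (1 : ℝ) < p := mod_cast hprime.one_lt
    have hlogp : 0 < log p := log_pos hp1
    have hlog_le : log p ≤ 2 * log X := by
      simpa [log_pow] using log_le_log (by linarith) hpX
    have := hω0 p
    calc ω p / p = log p * (ω p / (p * log p)) := by field_simp
      _ ≤ _ := by gcongr
  calc ∑ p ∈ primesIcc X (X ^ 2), ω p / p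
      ≤ 2 * log X * ∑ p ∈ primesIcc X (X ^ 2), ω p / (p * log p) := by
        rw [mul_sum]
        exact sum_le_sum hterm
    _ ≤ 2 * log X * (a / log X + |c| / log X ^ 2) := by
        gcongr
        exact hω.sum_div_mul_log_le hω0 ha hX _
    _ = 2 * a + 2 * |c| / log X := by field_simp
    _ ≤ 2 * a + 4 * |c| := by
        gcongr
        rw [div_le_iff₀ (by linarith)]
        nlinarith [abs_nonneg c]

lemma sum_div_le_mul_log (hω : LogWeightedPrimeBound ω a c) (hω0 : ∀ n, 0 ≤ ω n)
    (ha : 0 ≤ a) {X Y t : ℝ} (hX : 2 ≤ X) (ht : exp 1 ≤ t) (hY : Y ≤ X ^ t) :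
    ∑ p ∈ primesIcc X Y, ω p / p ≤ 4 * (2 * a + 4 * |c|) * log t := by
  have hnonneg (p : ℕ) : 0 ≤ ω p / p := div_nonneg (hω0 p) p.cast_nonneg
  have ht0 : 0 < t := (exp_pos 1).trans_le ht
  have hlogt : 1 ≤ log t := (le_log_iff_exp_le ht0).2 ht
  set K := ⌈logb 2 t⌉₊
  have htK : t ≤ (2 : ℝ) ^ K := by
    rw [← rpow_natCast, ← logb_le_iff_le_rpow one_lt_two ht0]
    exact Nat.le_ceil _
  have hlogb : logb 2 t ≤ 2 * log t := by
    rw [logb, div_le_iff₀ (log_pos one_lt_two)]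
    nlinarith [log_two_gt_d9]
  have hK : (K : ℝ) + 1 ≤ 4 * log t := by
    linarith [Nat.ceil_lt_add_one (logb_nonneg one_lt_two ((one_le_exp zero_le_one).trans ht))]
  have hYK : Y ≤ X ^ 2 ^ K := by
    refine hY.trans ?_
    rw [← rpow_natCast]
    push_cast
    gcongr
    linarith
  calc ∑ p ∈ primesIcc X Y, ω p / p
      ≤ ∑ p ∈ primesIcc X (X ^ 2 ^ K), ω p / p :=
        sum_le_sum_of_subset_of_nonneg (primesIcc_mono_right hYK) fun p _ _ => hnonneg p
    _ ≤ (2 * a + 4 * |c|) * (K + 1) :=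
        sum_primesIcc_pow_two_pow_le hnonneg
          (fun X hX => hω.sum_div_primesIcc_sq_le hω0 ha hX) K hX
    _ ≤ (2 * a + 4 * |c|) * (4 * log t) := by gcongr
    _ = _ := by ring

end LogWeightedPrimeBound

/-! ### The resonator at primes -/

/-- The primes `L² ≤ p ≤ exp(log² L)` on which the resonator is supported. -/
def resonatorPrimes (L : ℝ) : Finset ℕ := primesIcc (L ^ 2) (exp (log L ^ 2))

/-- The `p`-th Euler factor of the twisted second moment is `1 + eulerTerm ω ω' L p`; taking
`ω' = 0` gives the untwisted one. -/
def eulerTerm (ω ω' : ℕ → ℝ) (L : ℝ) (p : ℕ) : ℝ :=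
  rpR L p ^ 2 * ω p + rpR L p * ω' p / √p

lemma rpR_nonneg {L : ℝ} (hL : 0 ≤ L) (p : ℕ) : 0 ≤ rpR L p := by
  unfold rpR
  split_ifs
  · exact div_nonneg hL (mul_nonneg (sqrt_nonneg _) (log_natCast_nonneg p))
  · exact le_rfl

lemma rpR_eq_zero {L : ℝ} {p : ℕ} (hp : p.Prime) (hpL : p ∉ resonatorPrimes L) : rpR L p = 0 :=
  if_neg fun hr => hpL (mem_primesIcc.2 ⟨hr, hp⟩)

lemma rpR_of_mem {L : ℝ} {p : ℕ} (hp : p ∈ resonatorPrimes L) : rpR L p = L / (√p * log p) :=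
  if_pos (mem_primesIcc.1 hp).1

section EulerTerm

variable {ω ω' : ℕ → ℝ} {L : ℝ}

lemma eulerTerm_nonneg (hω0 : ∀ n, 0 ≤ ω n) (hω0' : ∀ n, 0 ≤ ω' n) (hL : 0 ≤ L) (p : ℕ) :
    0 ≤ eulerTerm ω ω' L p := by
  have := hω0 p
  have := hω0' p
  have := rpR_nonneg hL p
  unfold eulerTerm
  positivity

lemma eulerTerm_eq_zero {p : ℕ} (hp : p.Prime) (hpL : p ∉ resonatorPrimes L) :
    eulerTerm ω ω' L p = 0 := by
  simp [eulerTerm, rpR_eq_zero hp hpL]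

lemma eulerTerm_of_mem {p : ℕ} (hp : p ∈ resonatorPrimes L) :
    eulerTerm ω ω' L p = L ^ 2 * ω p / (p * log p ^ 2) + L * ω' p / (p * log p) := by
  have hsq : √(p : ℝ) ^ 2 = p := sq_sqrt p.cast_nonneg
  have htwist : L / (√p * log p) * ω' p / √p = L * ω' p / (√p ^ 2 * log p) := by ring
  rw [eulerTerm, rpR_of_mem hp, htwist, div_pow, mul_pow, hsq, div_mul_eq_mul_div]

lemma rpow_sub_one_le {y α : ℝ} (hy : 1 ≤ y) (hα : 0 ≤ α) (hαy : α * log y ≤ 1) :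
    y ^ α - 1 ≤ α * log y + (α * log y) ^ 2 := by
  have hnonneg : 0 ≤ α * log y := mul_nonneg hα (log_nonneg hy)
  have htaylor := (abs_le.1 (abs_exp_sub_one_sub_id_le (by rwa [abs_of_nonneg hnonneg]))).2
  rw [rpow_def_of_pos (by linarith), mul_comm (log y)]
  linarith

lemma rpow_sub_one_mul_eulerTerm_le (hω0 : ∀ n, 0 ≤ ω n) (hω0' : ∀ n, 0 ≤ ω' n) (hL : 0 ≤ L)
    {α : ℝ} (hα : 0 ≤ α) (hαL : α * log L ^ 2 ≤ 1) {p : ℕ} (hp : p ∈ resonatorPrimes L) :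
    ((p : ℝ) ^ α - 1) * eulerTerm ω ω' L p ≤
      α * L ^ 2 * (ω p / (p * log p)) + α ^ 2 * L ^ 2 * (ω p / p) + 2 * α * L * (ω' p / p) := by
  obtain ⟨⟨-, hpL⟩, hprime⟩ := mem_primesIcc.1 hp
  have hp1 : (1 : ℝ) < p := mod_cast hprime.one_lt
  have hlog : 0 < log p := log_pos hp1
  have hlogL : log p ≤ log L ^ 2 := (log_le_iff_le_exp (by linarith)).2 hpL
  have hαp : α * log p ≤ 1 := (mul_le_mul_of_nonneg_left hlogL hα).trans hαL
  have hquad := rpow_sub_one_le hp1.le hα hαp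
  have hlin : (p : ℝ) ^ α - 1 ≤ 2 * (α * log p) := by
    nlinarith [mul_nonneg hα hlog.le]
  have := hω0 p
  have := hω0' p
  rw [eulerTerm_of_mem hp, mul_add]
  calc ((p : ℝ) ^ α - 1) * (L ^ 2 * ω p / (p * log p ^ 2))
        + ((p : ℝ) ^ α - 1) * (L * ω' p / (p * log p))
      ≤ (α * log p + (α * log p) ^ 2) * (L ^ 2 * ω p / (p * log p ^ 2))
        + 2 * (α * log p) * (L * ω' p / (p * log p)) := by gcongr
    _ = _ := by field_simp

lemma sum_resonatorPrimes_div_le {c : ℝ} (hω' : ExpSqrtLogPrimeBound ω' c)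
    (hω0' : ∀ n, 0 ≤ ω' n) (hL : exp 1 ≤ L) :
    ∑ p ∈ resonatorPrimes L, ω' p / p ≤ |c| * L / log L ^ 2 := by
  have hL0 : 0 < L := (exp_pos 1).trans_le hL
  have hlogL : 1 ≤ log L := (le_log_iff_exp_le hL0).2 hL
  have hendpoint : 2 ≤ exp (log L ^ 2) := by
    linarith [add_one_le_exp (log L ^ 2), one_le_pow₀ hlogL (n := 2)]
  calc ∑ p ∈ resonatorPrimes L, ω' p / p
      ≤ ∑ p ∈ (Iic ⌊exp (log L ^ 2)⌋₊).filter Nat.Prime, ω' p / p :=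
        sum_le_sum_of_subset_of_nonneg (filter_subset_filter _ Icc_subset_Iic_self)
          fun p _ _ => div_nonneg (hω0' p) p.cast_nonneg
    _ ≤ c * exp √(log (exp (log L ^ 2))) / log (exp (log L ^ 2)) := hω' _ hendpoint
    _ = c * L / log L ^ 2 := by rw [log_exp, sqrt_sq (by linarith), exp_log hL0]
    _ ≤ _ := by
        gcongr
        exact le_abs_self c

lemma sum_rpow_sub_one_mul_eulerTerm_le {a c c' : ℝ} (hω0 : ∀ n, 0 ≤ ω n)
    (hω0' : ∀ n, 0 ≤ ω' n) (ha : 0 ≤ a) (hω : LogWeightedPrimeBound ω a c)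
    (hω' : ExpSqrtLogPrimeBound ω' c') (hL : exp 1 ≤ L) {x α : ℝ} (hx : exp 1 ≤ x)
    (hLx : log L ≤ x) (hα : 0 ≤ α) (hαx : α * x ^ 2 ≤ 1) :
    ∑ p ∈ resonatorPrimes L, ((p : ℝ) ^ α - 1) * eulerTerm ω ω' L p ≤
      α * (a * L ^ 2 / (2 * log L) + (|c| + 2 * |c'|) * L ^ 2 / log L ^ 2
        + α * L ^ 2 * (4 * (2 * a + 4 * |c|) * log x)) := by
  have hL0 : 0 < L := (exp_pos 1).trans_le hL
  have hlogL : 1 ≤ log L := (le_log_iff_exp_le hL0).2 hL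
  have hL2 : 2 ≤ L ^ 2 := by nlinarith [exp_one_gt_d9]
  have hαL : α * log L ^ 2 ≤ 1 := le_trans (by gcongr) hαx
  have hlog_weighted : ∑ p ∈ resonatorPrimes L, ω p / (p * log p) ≤
      a / (2 * log L) + |c| / log L ^ 2 := by
    refine (hω.sum_div_mul_log_le hω0 ha hL2 _).trans ?_
    rw [log_pow, Nat.cast_ofNat]
    gcongr
    linarith
  have hendpoint : exp (log L ^ 2) ≤ (L ^ 2) ^ x := by
    rw [rpow_def_of_pos (by positivity), log_pow, Nat.cast_ofNat, exp_le_exp]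
    nlinarith
  have hunweighted := hω.sum_div_le_mul_log hω0 ha hL2 hx hendpoint
  have htwist := sum_resonatorPrimes_div_le hω' hω0' hL
  calc ∑ p ∈ resonatorPrimes L, ((p : ℝ) ^ α - 1) * eulerTerm ω ω' L p
      ≤ ∑ p ∈ resonatorPrimes L, (α * L ^ 2 * (ω p / (p * log p))
          + α ^ 2 * L ^ 2 * (ω p / p) + 2 * α * L * (ω' p / p)) :=
        sum_le_sum fun p hp => rpow_sub_one_mul_eulerTerm_le hω0 hω0' hL0.le hα hαL hp
    _ = α * L ^ 2 * ∑ p ∈ resonatorPrimes L, ω p / (p * log p)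
          + α ^ 2 * L ^ 2 * ∑ p ∈ resonatorPrimes L, ω p / p
          + 2 * α * L * ∑ p ∈ resonatorPrimes L, ω' p / p := by
        simp only [sum_add_distrib, mul_sum]
    _ ≤ α * L ^ 2 * (a / (2 * log L) + |c| / log L ^ 2)
          + α ^ 2 * L ^ 2 * (4 * (2 * a + 4 * |c|) * log x)
          + 2 * α * L * (|c'| * L / log L ^ 2) := by
        gcongr
        exact hunweighted
    _ = _ := by ring

end EulerTerm

/-! ### The admissible range of the resonator parameter -/

/-- The largest resonator parameter `√(a⁻¹ log N log log N)` allowed for a given `N`, in terms of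
`x = log log N`. -/
def maxParameter (a x : ℝ) : ℝ := √(a⁻¹ * exp x * x)

section MaxParameter

variable {a x L : ℝ}

lemma maxParameter_sq (ha : 0 ≤ a) (hx : 0 ≤ x) : maxParameter a x ^ 2 = a⁻¹ * exp x * x :=
  sq_sqrt (by positivity)

lemma eventually_forall_of_le_maxParameter (ha : 0 ≤ a) {p : ℝ → Prop}
    (hp : ∀ᶠ x in atTop, p x) :
    ∀ᶠ L in atTop, ∀ x, 0 ≤ x → L ≤ maxParameter a x → p x := by
  obtain ⟨x₀, hx₀⟩ := eventually_atTop.1 hp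
  filter_upwards [eventually_gt_atTop (maxParameter a x₀)] with L hL x hx hLx
  refine hx₀ x (le_of_not_gt fun hlt => (hL.trans_le hLx).not_ge ?_)
  exact sqrt_le_sqrt (by gcongr)

lemma log_maxParameter (ha : 0 < a) (hx : 0 < x) :
    log (maxParameter a x) = (x + log x - log a) / 2 := by
  rw [maxParameter, log_sqrt (by positivity), log_mul (by positivity) hx.ne',
    log_mul (by positivity) (exp_pos x).ne', log_inv, log_exp]
  ring

lemma le_log_maxParameter (ha : 0 < a) (hx : 0 < x) (hxa : 2 * |log a| ≤ log x) :
    x / 2 + log x / 4 ≤ log (maxParameter a x) := by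
  rw [log_maxParameter ha hx]
  linarith [le_abs_self (log a)]

lemma log_le_half_self (hx : 0 < x) : log x ≤ x / 2 := by
  have hhalf := log_le_sub_one_of_pos (half_pos hx)
  rw [log_div hx.ne' two_ne_zero] at hhalf
  linarith [log_two_lt_d9]

lemma log_maxParameter_le (ha : 0 < a) (hx : 0 < x) (hxa : 2 * |log a| ≤ log x) :
    log (maxParameter a x) ≤ x := by
  rw [log_maxParameter ha hx]
  linarith [neg_abs_le (log a), log_le_half_self hx]

lemma div_log_le_div_log {y z : ℝ} (hy : exp 1 ≤ y) (hyz : y ≤ z) : y / log y ≤ z / log z := by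
  have hy0 : 0 < y := (exp_pos 1).trans_le hy
  have hlogy : 0 < log y := zero_lt_one.trans_le ((le_log_iff_exp_le hy0).2 hy)
  have hanti : log z / z ≤ log y / y := log_div_self_antitoneOn hy (hy.trans hyz) hyz
  have hlogz : 0 < log z := hlogy.trans_le (log_le_log hy0 hyz)
  simpa only [inv_div] using inv_anti₀ (div_pos hlogz (hy0.trans_le hyz)) hanti

-- At `L = maxParameter a x` the left-hand side is `exp x * x / (x + log x - log a)`: the `log x` in
-- the denominator is the saving that beats every `C`.
lemma mul_sq_div_log_le (ha : 0 < a) (hx : 1 ≤ x) (hxa : 2 * |log a| ≤ log x)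
    (hL : exp 1 ≤ L) (hLx : L ≤ maxParameter a x) :
    a * L ^ 2 / (2 * log L) ≤ exp x * (1 - log x / (4 * x)) := by
  have hx0 : 0 < x := by linarith
  have hlogx : 0 ≤ log x := log_nonneg hx
  have hlogM := le_log_maxParameter ha hx0 hxa
  have hL0 : 0 < L := (exp_pos 1).trans_le hL
  have hlogL : 1 ≤ log L := (le_log_iff_exp_le hL0).2 hL
  have hM0 : 0 ≤ maxParameter a x := sqrt_nonneg _
  have hquot := div_log_le_div_log hL hLx
  calc a * L ^ 2 / (2 * log L) = a / 2 * (L * (L / log L)) := by ring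
    _ ≤ a / 2 * (maxParameter a x * (maxParameter a x / log (maxParameter a x))) := by gcongr
    _ = a / 2 * (maxParameter a x ^ 2 / log (maxParameter a x)) := by ring
    _ ≤ a / 2 * (maxParameter a x ^ 2 / (x / 2 + log x / 4)) := by gcongr
    _ = exp x * (x / (x + log x / 2)) := by
        rw [maxParameter_sq ha.le hx0.le]
        field_simp
        ring
    _ ≤ exp x * (1 - log x / (4 * x)) := by
        gcongr
        rw [one_sub_div (by positivity), div_le_div_iff₀ (by positivity) (by positivity)]
        nlinarith [log_le_half_self hx0]

lemma mul_sq_div_log_sq_le (ha : 0 < a) (hx : 1 ≤ x) (hxa : 2 * |log a| ≤ log x)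
    (hL : exp 1 ≤ L) (hLx : L ≤ maxParameter a x) {b : ℝ} (hb : 0 ≤ b) :
    b * L ^ 2 / log L ^ 2 ≤ exp x * (4 * b / a / x) := by
  have hx0 : 0 < x := by linarith
  have hlogM : x / 2 ≤ log (maxParameter a x) := by
    linarith [le_log_maxParameter ha hx0 hxa, log_nonneg hx]
  have hL0 : 0 < L := (exp_pos 1).trans_le hL
  have hlogL : 1 ≤ log L := (le_log_iff_exp_le hL0).2 hL
  have : 0 ≤ maxParameter a x := sqrt_nonneg _
  have hquot := div_log_le_div_log hL hLx
  calc b * L ^ 2 / log L ^ 2 = b * (L / log L) ^ 2 := by ring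
    _ ≤ b * (maxParameter a x / log (maxParameter a x)) ^ 2 := by gcongr
    _ = b * (maxParameter a x ^ 2 / log (maxParameter a x) ^ 2) := by ring
    _ ≤ b * (maxParameter a x ^ 2 / (x / 2) ^ 2) := by gcongr
    _ = exp x * (4 * b / a / x) := by
        rw [maxParameter_sq ha.le hx0.le]
        field_simp
        norm_num

lemma div_sq_mul_sq_mul_log_le (ha : 0 < a) (hx : 1 ≤ x) (hL : 0 ≤ L)
    (hLx : L ≤ maxParameter a x) {b κ : ℝ} (hb : 0 ≤ b) (hκ : 0 ≤ κ) (hκb : κ * b ≤ a / 16) :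
    κ / x ^ 2 * L ^ 2 * (b * log x) ≤ exp x * (log x / 16 / x) := by
  have hx0 : 0 < x := by linarith
  have hlogx : 0 ≤ log x := log_nonneg hx
  calc κ / x ^ 2 * L ^ 2 * (b * log x)
      ≤ κ / x ^ 2 * maxParameter a x ^ 2 * (b * log x) := by gcongr
    _ = κ * b * (a⁻¹ * exp x * log x / x) := by
        rw [maxParameter_sq ha.le hx0.le]
        field_simp
    _ ≤ a / 16 * (a⁻¹ * exp x * log x / x) := by gcongr
    _ = exp x * (log x / 16 / x) := by field_simp

lemma eventually_rankin_exponent_le (ha : 0 < a) {b₁ b₂ κ : ℝ} (hb₁ : 0 ≤ b₁) (hb₂ : 0 ≤ b₂)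
    (hκ : 0 < κ) (hκb : κ * b₂ ≤ a / 16) (C : ℝ) :
    ∀ᶠ x in atTop, ∀ L, exp 1 ≤ L → L ≤ maxParameter a x →
      κ / x ^ 2 * (a * L ^ 2 / (2 * log L) + b₁ * L ^ 2 / log L ^ 2
        + κ / x ^ 2 * L ^ 2 * (b₂ * log x)) ≤ κ / x ^ 2 * exp x + -C / x ^ 3 * exp x := by
  filter_upwards [eventually_ge_atTop 1, tendsto_log_atTop.eventually_ge_atTop (2 * |log a|),
    tendsto_log_atTop.eventually_ge_atTop (16 * (4 * b₁ / a)),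
    tendsto_log_atTop.eventually_ge_atTop (8 * (C / κ))] with x hx hxa hxb hxC L hL hLx
  have : 0 < x := by linarith
  have hmain := mul_sq_div_log_le ha hx hxa hL hLx
  have hsecond := mul_sq_div_log_sq_le ha hx hxa hL hLx hb₁
  have hthird := div_sq_mul_sq_mul_log_le ha hx ((exp_pos 1).le.trans hL) hLx hb₂ hκ.le hκb
  calc κ / x ^ 2 * (a * L ^ 2 / (2 * log L) + b₁ * L ^ 2 / log L ^ 2
        + κ / x ^ 2 * L ^ 2 * (b₂ * log x))
      ≤ κ / x ^ 2 * (exp x * (1 - log x / (4 * x)) + exp x * (4 * b₁ / a / x)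
        + exp x * (log x / 16 / x)) := by gcongr
    _ = κ / x ^ 2 * exp x * (1 - (log x / 4 - 4 * b₁ / a - log x / 16) / x) := by
        field_simp
        ring
    _ ≤ κ / x ^ 2 * exp x * (1 - C / κ / x) := by
        gcongr
        linarith
    _ = κ / x ^ 2 * exp x + -C / x ^ 3 * exp x := by
        field_simp
        ring

lemma eventually_log_le_of_le_maxParameter (ha : 0 < a) :
    ∀ᶠ x in atTop, ∀ L, 0 < L → L ≤ maxParameter a x → log L ≤ x := by
  filter_upwards [eventually_gt_atTop 0, tendsto_log_atTop.eventually_ge_atTop (2 * |log a|)]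
    with x hx hxa L hL hLx
  exact (log_le_log hL hLx).trans (log_maxParameter_le ha hx hxa)

end MaxParameter

/-! ### The tail bound -/

lemma tprod_one_add_eulerTerm (ω ω' : ℕ → ℝ) (L : ℝ) :
    ∏' p : Nat.Primes, (1 + eulerTerm ω ω' L p) =
      ∏ p ∈ resonatorPrimes L, (1 + eulerTerm ω ω' L p) :=
  tprod_primes_eq_prod (f := fun p => 1 + eulerTerm ω ω' L p)
    (fun _ => prime_of_mem_primesIcc) fun p hp hpL => by rw [eulerTerm_eq_zero hp hpL, add_zero]

section TailBound

variable {ω ω' : ℕ → ℝ}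

lemma eventually_abs_sum_squarefreeExt_eulerTerm_sub_tprod_le {a c c' : ℝ} (ha : 0 < a)
    (hω0 : ∀ n, 0 ≤ ω n) (hω : LogWeightedPrimeBound ω a c)
    (hω0' : ∀ n, 0 ≤ ω' n) (hω' : ExpSqrtLogPrimeBound ω' c') (C : ℝ) :
    ∀ᶠ L in atTop, ∀ N : ℕ, 3 ≤ N → L ≤ √(a⁻¹ * log N * log (log N)) →
      |∑ k ∈ Icc 1 N, squarefreeExt (eulerTerm ω ω' L) k
          - ∏' p : Nat.Primes, (1 + eulerTerm ω ω' L p)| ≤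
        (N : ℝ) ^ (-C / log (log N) ^ 3) * ∏' p : Nat.Primes, (1 + eulerTerm ω ω' L p) := by
  set b := 4 * (2 * a + 4 * |c|)
  have hb : 0 < b := by positivity
  obtain ⟨κ, hκ0, hκ1, hκb⟩ : ∃ κ > 0, κ ≤ 1 ∧ κ * b ≤ a / 16 := by
    refine ⟨min 1 (a / 16 / b), lt_min one_pos (by positivity), min_le_left _ _, ?_⟩
    rw [← le_div_iff₀ hb]
    exact min_le_right _ _
  filter_upwards [eventually_ge_atTop (exp 1), eventually_forall_of_le_maxParameter ha.le <|
      (eventually_ge_atTop (exp 1)).and <| (eventually_log_le_of_le_maxParameter ha).and <|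
        eventually_rankin_exponent_le ha (b₁ := |c| + 2 * |c'|) (by positivity) hb.le hκ0 hκb C]
    with L hL hlarge N hN hLN
  have hL0 : 0 < L := (exp_pos 1).trans_le hL
  have hN3 : (3 : ℝ) ≤ N := mod_cast hN
  have hlogN : 1 ≤ log N := (le_log_iff_exp_le (by linarith)).2 (by linarith [exp_one_lt_d9])
  set x := log (log N)
  have hexpx : exp x = log N := exp_log (by linarith)
  have hLx : L ≤ maxParameter a x := by rwa [maxParameter, hexpx]
  obtain ⟨hx, hlogL, hexponent⟩ := hlarge x (log_nonneg hlogN) hLx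
  have hx0 : 0 < x := (exp_pos 1).trans_le hx
  have hsum := sum_rpow_sub_one_mul_eulerTerm_le hω0 hω0' ha.le hω hω' hL hx (hlogL L hL0 hLx)
    (α := κ / x ^ 2) (by positivity) (by rwa [div_mul_cancel₀ κ (by positivity)])
  have hnonneg := eulerTerm_nonneg hω0 hω0' hL0.le
  rw [tprod_one_add_eulerTerm]
  refine (abs_sum_squarefreeExt_sub_prod_le (P := resonatorPrimes L) (α := κ / x ^ 2)
    (fun _ => prime_of_mem_primesIcc) hnonneg (fun _ => eulerTerm_eq_zero) (by positivity)
    (by lia)).trans <|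
    mul_le_mul_of_nonneg_right ?_ (prod_nonneg fun p _ => add_nonneg zero_le_one (hnonneg p))
  rw [rpow_def_of_pos (by linarith), exp_le_exp, ← hexpx]
  linarith [hexponent L hL hLx]

lemma resR_sq_mul_eq_squarefreeExt (hω1 : ω 1 = 1)
    (hωm : ∀ m n : ℕ, m.Coprime n → ω (m * n) = ω m * ω n) (L : ℝ) (n : ℕ) :
    resR L n ^ 2 * ω n = squarefreeExt (fun p => rpR L p ^ 2 * ω p) n := by
  rw [squarefreeExt_mul_of_multiplicative _ hω1 hωm]
  simp only [sq, squarefreeExt_mul]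
  rfl

lemma resR_mul_div_sqrt_eq_squarefreeExt (hω1 : ω 1 = 1)
    (hωm : ∀ m n : ℕ, m.Coprime n → ω (m * n) = ω m * ω n) (L : ℝ) (n : ℕ) :
    resR L n * ω n / √n = squarefreeExt (fun p => rpR L p * ω p / √p) n := by
  simp only [mul_div_assoc]
  refine (squarefreeExt_mul_of_multiplicative (rpR L) (g := fun n => ω n / √n) (by simp [hω1])
    (fun m n hmn => ?_) n).symm
  rw [hωm m n hmn, Nat.cast_mul, sqrt_mul m.cast_nonneg, mul_div_mul_comm]

lemma sum_resR_sq_mul_eq_sum_squarefreeExt (hω1 : ω 1 = 1)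
    (hωm : ∀ m n : ℕ, m.Coprime n → ω (m * n) = ω m * ω n) (L : ℝ) (N : ℕ) :
    ∑ n ∈ Icc 1 N, resR L n ^ 2 * ω n = ∑ k ∈ Icc 1 N, squarefreeExt (eulerTerm ω 0 L) k := by
  have hterm : eulerTerm ω 0 L = fun p => rpR L p ^ 2 * ω p := by
    ext p
    simp [eulerTerm]
  simp only [resR_sq_mul_eq_squarefreeExt hω1 hωm, hterm]

lemma sum_coprime_resR_eq_sum_squarefreeExt (hω1 : ω 1 = 1)
    (hωm : ∀ m n : ℕ, m.Coprime n → ω (m * n) = ω m * ω n) (hω1' : ω' 1 = 1)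
    (hωm' : ∀ m n : ℕ, m.Coprime n → ω' (m * n) = ω' m * ω' n) (L : ℝ) (N : ℕ) :
    (∑ n ∈ Icc 1 N, ∑ m ∈ Icc 1 (N / n),
      if n.Coprime m then resR L n ^ 2 * resR L m * ω n * ω' m / √m else 0) =
      ∑ k ∈ Icc 1 N, squarefreeExt (eulerTerm ω ω' L) k := by
  have hsplit (n m : ℕ) : resR L n ^ 2 * resR L m * ω n * ω' m / √m =
      squarefreeExt (fun p => rpR L p ^ 2 * ω p) n *
        squarefreeExt (fun p => rpR L p * ω' p / √p) m := by
    rw [← resR_sq_mul_eq_squarefreeExt hω1 hωm, ← resR_mul_div_sqrt_eq_squarefreeExt hω1' hωm']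
    ring
  rw [sum_Icc_sum_Icc_div_eq_sum_divisorsAntidiagonal
    (fun n m => if n.Coprime m then resR L n ^ 2 * resR L m * ω n * ω' m / √m else 0)]
  simp only [hsplit, sum_divisorsAntidiagonal_coprime_squarefreeExt]
  rfl

end TailBound

end

/-- Small tails for the resonator (extreme values range).  Let `r(n)` be the resonator
sequence with parameter `L` and let `ω(n) ≥ 0` be a multiplicative function satisfying
`Σ_{X ≤ p ≤ Y} ω(p)/(p log p) ≤ a_ω(1/log X − 1/log Y) + O_ω(1/log²X)` for all
`Y ≥ 2X ≥ 4`, for some `a_ω > 0`.  Then for every `N` with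
`L ≤ √(a_ω⁻¹ log N log log N)` one has
`Σ_{n ≤ N} r(n)² ω(n) = (1 + o*(1)) Π_p (1 + r(p)² ω(p))`; and if additionally
`ω′(n) ≥ 0` is multiplicative with `Σ_{p ≤ X} ω′(p)/p ≪ e^{√(log X)}/log X`, then
`Σ_{nm ≤ N, (n,m)=1} r(n)² r(m) ω(n) ω′(m)/√m
  = (1 + o*(1)) Π_p (1 + r(p)² ω(p) + r(p) ω′(p)/√p)`,
where `o*(1)` denotes a quantity that is `O_C(N^{−C/(log log N)³})` for any `C > 0`. -/
theorem resonator_small_tails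
    (ω : ℕ → ℝ) (hω0 : ∀ n, 0 ≤ ω n) (hω1 : ω 1 = 1)
    (hωm : ∀ m n : ℕ, Nat.Coprime m n → ω (m * n) = ω m * ω n)
    (aω Cω : ℝ) (haω : 0 < aω)
    (hωbound : ∀ X Y : ℝ, 2 ≤ X → 2 * X ≤ Y →
      ∑ p ∈ (Finset.Icc ⌈X⌉₊ ⌊Y⌋₊).filter Nat.Prime, ω p / (p * Real.log p) ≤
        aω * (1 / Real.log X - 1 / Real.log Y) + Cω / (Real.log X) ^ 2) :
    (∀ C : ℝ, 0 < C → ∃ D L₀ : ℝ, ∀ L : ℝ, L₀ ≤ L → ∀ N : ℕ, 16 ≤ N →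
      L ≤ Real.sqrt (aω⁻¹ * Real.log N * Real.log (Real.log N)) →
        |(∑ n ∈ Finset.Icc 1 N, (resR L n) ^ 2 * ω n) -
            ∏' p : Nat.Primes, (1 + (rpR L p) ^ 2 * ω p)| ≤
          D * (N : ℝ) ^ (-C / (Real.log (Real.log N)) ^ 3) *
            ∏' p : Nat.Primes, (1 + (rpR L p) ^ 2 * ω p)) ∧
    (∀ ω' : ℕ → ℝ, (∀ n, 0 ≤ ω' n) → ω' 1 = 1 →
      (∀ m n : ℕ, Nat.Coprime m n → ω' (m * n) = ω' m * ω' n) →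
      ∀ Cω' : ℝ,
      (∀ X : ℝ, 2 ≤ X →
        ∑ p ∈ (Finset.Iic ⌊X⌋₊).filter Nat.Prime, ω' p / p ≤
          Cω' * Real.exp (Real.sqrt (Real.log X)) / Real.log X) →
      ∀ C : ℝ, 0 < C → ∃ D L₀ : ℝ, ∀ L : ℝ, L₀ ≤ L → ∀ N : ℕ, 16 ≤ N →
        L ≤ Real.sqrt (aω⁻¹ * Real.log N * Real.log (Real.log N)) →
          |(∑ n ∈ Finset.Icc 1 N, ∑ m ∈ Finset.Icc 1 (N / n),
                if Nat.Coprime n m then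
                  (resR L n) ^ 2 * resR L m * ω n * ω' m / Real.sqrt m else 0) -
              ∏' p : Nat.Primes, (1 + (rpR L p) ^ 2 * ω p + rpR L p * ω' p / Real.sqrt p)| ≤
            D * (N : ℝ) ^ (-C / (Real.log (Real.log N)) ^ 3) *
              ∏' p : Nat.Primes,
                (1 + (rpR L p) ^ 2 * ω p + rpR L p * ω' p / Real.sqrt p)) := by
  refine ⟨fun C _ => ?_, fun ω' hω0' hω1' hωm' Cω' hωbound' C _ => ?_⟩
  · have hω'_zero : ExpSqrtLogPrimeBound 0 0 := fun X _ => by simp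
    obtain ⟨L₀, htail⟩ := eventually_atTop.1 <|
      eventually_abs_sum_squarefreeExt_eulerTerm_sub_tprod_le (ω' := 0) haω hω0 hωbound
        (fun _ => le_rfl) hω'_zero C
    refine ⟨1, L₀, fun L hL N hN hLN => ?_⟩
    rw [one_mul, sum_resR_sq_mul_eq_sum_squarefreeExt hω1 hωm]
    simpa [eulerTerm] using htail L hL N (by lia) hLN
  · obtain ⟨L₀, htail⟩ := eventually_atTop.1 <|
      eventually_abs_sum_squarefreeExt_eulerTerm_sub_tprod_le haω hω0 hωbound hω0' hωbound' C
    refine ⟨1, L₀, fun L hL N hN hLN => ?_⟩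
    simp only [one_mul, add_assoc, sum_coprime_resR_eq_sum_squarefreeExt hω1 hωm hω1' hωm']
    exact htail L hL N (by lia) hLN

end
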